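/- Let p, q : ℕ with 2 ≤ p < q and gcd(p, q) = 1, and let f := Y^p − X^q ∈ R := MvPolynomial ℂ (Fin 2). Then both A ⧸ Ideal.span {ι f, ι(i_f)} and A ⧸ Ideal.span {ι f, ι(v_f)} are finite-dimensional ℂ-vector spaces, with Module.finrank ℂ (A ⧸ Ideal.span {ι f, ι(i_f)}) = 3(p−1)(q−1) + p + q − 3 and Module.finrank ℂ (A ⧸ Ideal.span {ι f, ι(v_f)}) = 6(p−1)(q−1) + 3p + q − 6. -/

import Mathlib

open MvPolynomial

noncomputable section

/-- Partial derivative with respect to the first variable `X`. -/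
def dx (f : MvPolynomial (Fin 2) ℂ) : MvPolynomial (Fin 2) ℂ := pderiv 0 f

/-- Partial derivative with respect to the second variable `Y`. -/
def dy (f : MvPolynomial (Fin 2) ℂ) : MvPolynomial (Fin 2) ℂ := pderiv 1 f

/-- The inflection polynomial `i_f = f_y²·f_xx − 2·f_x·f_y·f_xy + f_x²·f_yy`. -/
def infl (f : MvPolynomial (Fin 2) ℂ) : MvPolynomial (Fin 2) ℂ :=
  (dy f) ^ 2 * dx (dx f) - 2 * dx f * dy f * dy (dx f) + (dx f) ^ 2 * dy (dy f)

/-- The vertex polynomial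
`v_f = (f_x² + f_y²)(f_x³ f_yyy − 3 f_x² f_y f_xyy + 3 f_x f_y² f_xxy − f_y³ f_xxx)
      − 3((f_x² − f_y²) f_xy − f_x f_y (f_xx − f_yy)) · i_f`. -/
def vert (f : MvPolynomial (Fin 2) ℂ) : MvPolynomial (Fin 2) ℂ :=
  ((dx f) ^ 2 + (dy f) ^ 2) *
      ((dx f) ^ 3 * dy (dy (dy f)) - 3 * (dx f) ^ 2 * dy f * dy (dy (dx f)) +
        3 * dx f * (dy f) ^ 2 * dy (dx (dx f)) - (dy f) ^ 3 * dx (dx (dx f))) -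
    3 * (((dx f) ^ 2 - (dy f) ^ 2) * dy (dx f) - dx f * dy f * (dx (dx f) - dy (dy f))) *
      infl f

/-- The canonical map from polynomials to formal power series in two variables. -/
def ι : MvPolynomial (Fin 2) ℂ →+* MvPowerSeries (Fin 2) ℂ :=
  MvPolynomial.coeToMvPowerSeries.ringHom

/-- The local intersection number at the origin of the curves `g = 0` and `h = 0`:
the `ℂ`-dimension of `ℂ⟦x,y⟧/⟨g,h⟩`. -/
def interMult (g h : MvPolynomial (Fin 2) ℂ) : ℕ :=
  Module.finrank ℂ (MvPowerSeries (Fin 2) ℂ ⧸ Ideal.span {ι g, ι h})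

end

/-!
Over a field `k`, coprimality of `p` and `q` makes `k⟦x, y⟧/(y ^ p - x ^ q)`, via `x ↦ t ^ p` and
`y ↦ t ^ q`, a subring of finite codimension in `k⟦t⟧`. Computing the length of `k⟦t⟧` modulo the
image of the composite `k⟦x, y⟧/(y ^ p - x ^ q) → k⟦t⟧ → k⟦t⟧` of this inclusion with
multiplication by `g` in two ways, the codimension cancels: the intersection number of the cusp
with `g = 0` is the order of `g(t ^ p, t ^ q)` in `t`.

For `f = y ^ p - x ^ q` the mixed partials vanish, and `x ^ n ∂ₓⁿ f` and `y ^ n ∂ᵧⁿ f` are multiples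
of `x ^ q` and `y ^ p`, hence of `s = t ^ (p * q)` on the curve. So there
`x² y² i_f = p q (p - q) s³` and
`x⁵ y⁵ v_f = p q (p - q) (p² (2 p - q) x² + q² (2 q - p) y²) s⁶`, and the orders can be read off,
because `2 p ≠ q`.
-/

open scoped PowerSeries

section Length

variable {R M N P : Type*} [Ring R] [AddCommGroup M] [AddCommGroup N] [AddCommGroup P]
  [Module R M] [Module R N] [Module R P]

theorem length_quotient_range_comp (u : M →ₗ[R] N) {v : N →ₗ[R] P}
    (hv : Function.Injective v) :
    Module.length R (P ⧸ (v ∘ₗ u).range) =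
      Module.length R (N ⧸ u.range) + Module.length R (P ⧸ v.range) := by
  have hcomap : u.range = (v ∘ₗ u).range.comap v := by
    rw [LinearMap.range_comp, Submodule.comap_map_eq_of_injective hv]
  refine Module.length_eq_add_of_exact (u.range.mapQ (v ∘ₗ u).range v hcomap.le)
    (Submodule.factor (LinearMap.range_comp_le_range u v)) ?_
    (Submodule.factor_surjective _) ?_
  · refine LinearMap.ker_eq_bot.1 (Submodule.ker_liftQ_eq_bot _ _ _ ?_)
    rw [LinearMap.ker_comp, Submodule.ker_mkQ, ← hcomap]
  · rw [LinearMap.exact_iff, Submodule.mapQ, Submodule.range_liftQ, Submodule.factor,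
      Submodule.mapQ, Submodule.ker_liftQ, LinearMap.comp_id, Submodule.ker_mkQ,
      LinearMap.range_comp (g := Submodule.mkQ _)]

theorem length_quotient_range_eq_of_comp_eq {φ : M →ₗ[R] N} (hφ : Function.Injective φ)
    (hfin : Module.length R (N ⧸ φ.range) ≠ ⊤) {u : M →ₗ[R] M} {v : N →ₗ[R] N}
    (hv : Function.Injective v) (hcomm : φ ∘ₗ u = v ∘ₗ φ) :
    Module.length R (M ⧸ u.range) = Module.length R (N ⧸ v.range) := by
  have hadd : Module.length R (N ⧸ φ.range) + Module.length R (M ⧸ u.range) =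
      Module.length R (N ⧸ φ.range) + Module.length R (N ⧸ v.range) := by
    rw [← length_quotient_range_comp φ hv, ← hcomm, length_quotient_range_comp u hφ, add_comm]
  exact (ENat.addLECancellable_of_ne_top hfin).inj.1 hadd

end Length

section Algebra

variable {k A B : Type*} [CommRing k] [CommRing A] [CommRing B] [Algebra k A] [Algebra k B]

variable (k) in
theorem length_quotient_restrictScalars (I : Ideal A) :
    Module.length k (A ⧸ I.restrictScalars k) = Module.length k (A ⧸ I) :=
  (Submodule.Quotient.restrictScalarsEquiv k I).length_eq

variable (k) in
theorem length_quotient_span_singleton (a : A) :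
    Module.length k (A ⧸ Ideal.span {a}) =
      Module.length k (A ⧸ (LinearMap.mulLeft k a).range) := by
  have hrange : (Ideal.span {a}).restrictScalars k = (LinearMap.mulLeft k a).range := by
    ext x
    simp [Ideal.mem_span_singleton, dvd_def, eq_comm]
  rw [← hrange, length_quotient_restrictScalars]

theorem length_quotient_ker_sup_span_singleton (φ : A →ₐ[k] B)
    (hfin : Module.length k (B ⧸ φ.toLinearMap.range) ≠ ⊤) {g : A}
    (hg : φ g ∈ nonZeroDivisors B) :
    Module.length k (A ⧸ RingHom.ker φ ⊔ Ideal.span {g}) =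
      Module.length k (B ⧸ Ideal.span {φ g}) := by
  have hspan : (Ideal.span {g}).map (Ideal.Quotient.mkₐ k (RingHom.ker φ)) =
      Ideal.span {Ideal.Quotient.mk (RingHom.ker φ) g} := by
    simp [Ideal.map_span]
  have hrange : (Ideal.kerLiftAlg φ).toLinearMap.range = φ.toLinearMap.range := by
    ext b
    simp [(Ideal.Quotient.mk_surjective (I := RingHom.ker φ)).exists]
  rw [← (DoubleQuot.quotQuotEquivQuotSupₐ k _ _).toLinearEquiv.length_eq, hspan,
    length_quotient_span_singleton k, length_quotient_span_singleton k]
  exact length_quotient_range_eq_of_comp_eq (φ := (Ideal.kerLiftAlg φ).toLinearMap)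
    (Ideal.kerLiftAlg_injective φ) (by rwa [hrange])
    (fun x y hxy ↦ (mul_cancel_left_mem_nonZeroDivisors hg).1 hxy)
    (LinearMap.ext fun x ↦ map_mul (Ideal.kerLiftAlg φ) _ x)

end Algebra

theorem finiteDimensional_of_length_ne_top {k V : Type*} [Field k] [AddCommGroup V] [Module k V]
    (h : Module.length k V ≠ ⊤) : FiniteDimensional k V :=
  have : IsNoetherian k V :=
    (isFiniteLength_iff_isNoetherian_isArtinian.1 (Module.length_ne_top_iff.1 h)).1
  inferInstance

section PowerSeries

variable {k : Type*} [Field k]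

theorem length_quotient_span_powerSeries_X_pow (n : ℕ) :
    Module.length k (k⟦X⟧ ⧸ Ideal.span {(PowerSeries.X : k⟦X⟧) ^ n}) = n := by
  let initialCoeffs : k⟦X⟧ →ₗ[k] (Fin n → k) :=
    LinearMap.pi fun i ↦ PowerSeries.coeff (i : ℕ)
  have hsurj : Function.Surjective initialCoeffs := fun v ↦
    ⟨PowerSeries.mk fun m ↦ if h : m < n then v ⟨m, h⟩ else 0, by ext i; simp [initialCoeffs]⟩
  have hker : (Ideal.span {(PowerSeries.X : k⟦X⟧) ^ n}).restrictScalars k =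
      initialCoeffs.ker := by
    ext h
    simp [initialCoeffs, Ideal.mem_span_singleton, PowerSeries.X_pow_dvd_iff, funext_iff,
      Fin.forall_iff]
  rw [← length_quotient_restrictScalars, hker,
    (initialCoeffs.quotKerEquivOfSurjective hsurj).length_eq, Module.length_eq_finrank]
  simp

theorem length_quotient_span_singleton_eq_order {G : k⟦X⟧} (hG : G ≠ 0) :
    Module.length k (k⟦X⟧ ⧸ Ideal.span {G}) = G.order := by
  have hassoc : Associated (PowerSeries.X ^ G.order.toNat) G :=
    ⟨(PowerSeries.isUnit_divided_by_X_pow_order hG).unit, PowerSeries.X_pow_order_mul_divXPowOrder⟩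
  rw [← Ideal.span_singleton_eq_span_singleton.2 hassoc, length_quotient_span_powerSeries_X_pow,
    PowerSeries.coe_toNat_order hG]

theorem order_add_eq_of_X_pow_mul_eq {G U : k⟦X⟧} {a b : ℕ}
    (hU : PowerSeries.constantCoeff U ≠ 0)
    (h : PowerSeries.X ^ a * G = PowerSeries.X ^ b * U) : G.order + a = b := by
  have hU0 : U.order = 0 :=
    PowerSeries.order_zero_of_unit (PowerSeries.isUnit_iff_constantCoeff.2 hU.isUnit)
  simpa [PowerSeries.order_mul, hU0, add_comm] using congrArg PowerSeries.order h

end PowerSeries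

section WeierstrassDivision

variable {R : Type*} [CommRing R] {p q : ℕ}

/-- Coefficients of the quotient of a series with coefficients `c` by `Y ^ p - X ^ q`, obtained by
solving for the coefficient of `X ^ i * Y ^ (j + p)`. -/
def divCuspCoeff (p : ℕ) (hq : 0 < q) (c : ℕ → ℕ → R) (i j : ℕ) : R :=
  c i (j + p) + if _h : q ≤ i then divCuspCoeff p hq c (i - q) (j + p) else 0
termination_by i

theorem exists_dvd_sub_of_reduced (p : ℕ) (hq : 0 < q) (F : MvPowerSeries (Fin 2) R) :
    ∃ r : MvPowerSeries (Fin 2) R,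
      MvPowerSeries.X 1 ^ p - MvPowerSeries.X 0 ^ q ∣ F - r ∧
        ∀ d : Fin 2 →₀ ℕ, p ≤ d 1 → MvPowerSeries.coeff d r = 0 := by
  let c (i j : ℕ) : R := MvPowerSeries.coeff (Finsupp.single 0 i + Finsupp.single 1 j) F
  let Q : MvPowerSeries (Fin 2) R := fun d ↦ divCuspCoeff p hq c (d 0) (d 1)
  have coeff_Q (d : Fin 2 →₀ ℕ) :
      MvPowerSeries.coeff d Q = divCuspCoeff p hq c (d 0) (d 1) := rfl
  refine ⟨F - (MvPowerSeries.X 1 ^ p - MvPowerSeries.X 0 ^ q) * Q, by simp, fun d hd ↦ ?_⟩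
  have hd_eq : Finsupp.single 0 (d 0) + Finsupp.single 1 (d 1) = d := by
    ext i
    fin_cases i <;> simp
  have hF : MvPowerSeries.coeff d F = c (d 0) (d 1) := by
    simp only [c, hd_eq]
  rw [map_sub, sub_mul, map_sub, MvPowerSeries.X_pow_eq, MvPowerSeries.X_pow_eq,
    MvPowerSeries.coeff_monomial_mul, MvPowerSeries.coeff_monomial_mul, coeff_Q, coeff_Q,
    divCuspCoeff]
  simp [hd, hF, Nat.sub_add_cancel hd]

end WeierstrassDivision

section Weights

variable {p q : ℕ}

theorem eq_of_cuspWeight_eq (hp : 0 < p) (hpq : p.Coprime q) {d e : Fin 2 →₀ ℕ} (hd : d 1 < p)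
    (he : e 1 < p) (h : p * d 0 + q * d 1 = p * e 0 + q * e 1) : d = e := by
  have hmod : q * d 1 ≡ q * e 1 [MOD p] := by
    simpa [Nat.ModEq, Nat.add_mod] using congrArg (· % p) h
  have h1 : d 1 = e 1 := (hmod.cancel_left_of_coprime hpq).eq_of_lt_of_lt hd he
  have h0 : d 0 = e 0 := Nat.eq_of_mul_eq_mul_left hp (by rw [h1] at h; omega)
  ext i
  fin_cases i
  exacts [h0, h1]

theorem exists_cuspWeight_eq (hp : 0 < p) (hpq : p.Coprime q) {n : ℕ} (hn : p * q ≤ n) :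
    ∃ d : Fin 2 →₀ ℕ, d 1 < p ∧ p * d 0 + q * d 1 = n := by
  obtain ⟨j, hj, hmod⟩ := Nat.exists_mul_mod_eq_of_coprime n hpq.symm hp.ne'
  have hle : q * j ≤ n := le_trans (by rw [mul_comm p]; gcongr) hn
  obtain ⟨i, hi⟩ := (Nat.modEq_iff_dvd' hle).1 hmod
  exact ⟨Finsupp.single 0 i + Finsupp.single 1 j, by simpa, by simp; omega⟩

end Weights

section Parametrisation

variable (R : Type*) [CommRing R] (p q : ℕ) [NeZero p] [NeZero q]

theorem hasSubst_X_pow_X_pow :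
    MvPowerSeries.HasSubst (S := R) (τ := Unit)
      (![PowerSeries.X ^ p, PowerSeries.X ^ q] : Fin 2 → R⟦X⟧) :=
  MvPowerSeries.hasSubst_of_constantCoeff_zero <| Fin.forall_fin_two.2
    ⟨(map_pow PowerSeries.constantCoeff _ _).trans (by simp [NeZero.ne p]),
      (map_pow PowerSeries.constantCoeff _ _).trans (by simp [NeZero.ne q])⟩

/-- The parametrisation `(t ^ p, t ^ q)` of the cusp `Y ^ p = X ^ q`, as the substitution
homomorphism sending `X` to `t ^ p` and `Y` to `t ^ q`. -/
noncomputable def cuspParam : MvPowerSeries (Fin 2) R →ₐ[R] R⟦X⟧ :=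
  MvPowerSeries.substAlgHom (hasSubst_X_pow_X_pow R p q)

variable {R p q}

@[simp]
theorem cuspParam_X_zero : cuspParam R p q (MvPowerSeries.X 0) = PowerSeries.X ^ p :=
  MvPowerSeries.substAlgHom_X _ 0

@[simp]
theorem cuspParam_X_one : cuspParam R p q (MvPowerSeries.X 1) = PowerSeries.X ^ q :=
  MvPowerSeries.substAlgHom_X _ 1

theorem coeff_cuspParam (F : MvPowerSeries (Fin 2) R) (n : ℕ) :
    PowerSeries.coeff n (cuspParam R p q F) =
      ∑ᶠ d : Fin 2 →₀ ℕ, if p * d 0 + q * d 1 = n then MvPowerSeries.coeff d F else 0 := by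
  rw [cuspParam, MvPowerSeries.substAlgHom_apply, PowerSeries.coeff,
    MvPowerSeries.coeff_subst (hasSubst_X_pow_X_pow R p q)]
  refine finsum_congr fun d ↦ ?_
  have hprod : (d.prod fun s k ↦ (![PowerSeries.X ^ p, PowerSeries.X ^ q] : Fin 2 → R⟦X⟧) s ^ k) =
      PowerSeries.X ^ (p * d 0 + q * d 1) := by
    simp [Finsupp.prod_fintype, pow_add, pow_mul]
  have hcoeff := PowerSeries.coeff_X_pow (R := R) n (p * d 0 + q * d 1)
  rw [← hprod, PowerSeries.coeff] at hcoeff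
  refine (congrArg (MvPowerSeries.coeff d F • ·) hcoeff).trans ?_
  simp [eq_comm]

theorem cuspParam_equation :
    cuspParam R p q (MvPowerSeries.X 1 ^ p - MvPowerSeries.X 0 ^ q) = 0 := by
  simp [← pow_mul, mul_comm]

theorem coeff_cuspParam_of_reduced (hpq : p.Coprime q) {F : MvPowerSeries (Fin 2) R}
    (hF : ∀ d : Fin 2 →₀ ℕ, p ≤ d 1 → MvPowerSeries.coeff d F = 0) {d : Fin 2 →₀ ℕ}
    (hd : d 1 < p) :
    PowerSeries.coeff (p * d 0 + q * d 1) (cuspParam R p q F) = MvPowerSeries.coeff d F := by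
  rw [coeff_cuspParam, finsum_eq_single _ d, if_pos rfl]
  intro e hed
  refine ite_eq_right_iff.2 fun hweight ↦ hF e ?_
  by_contra! he
  exact hed (eq_of_cuspWeight_eq (NeZero.pos p) hpq he hd hweight)

theorem ker_cuspParam (hpq : p.Coprime q) :
    RingHom.ker (cuspParam R p q) =
      Ideal.span {MvPowerSeries.X 1 ^ p - MvPowerSeries.X 0 ^ q} := by
  refine le_antisymm (fun F hF ↦ ?_) <|
    (Ideal.span_singleton_le_iff_mem _).2 cuspParam_equation
  obtain ⟨r, ⟨Q, hQ⟩, hr⟩ := exists_dvd_sub_of_reduced p (NeZero.pos q) F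
  have hr_param : cuspParam R p q r = 0 := by
    have := congrArg (cuspParam R p q) hQ
    rwa [map_mul, cuspParam_equation, zero_mul, map_sub, hF, zero_sub, neg_eq_zero] at this
  have hr_zero : r = 0 := by
    ext d
    rcases lt_or_ge (d 1) p with hd | hd
    · rw [← coeff_cuspParam_of_reduced hpq hr hd, hr_param, map_zero, map_zero]
    · rw [hr d hd, map_zero]
  rw [Ideal.mem_span_singleton]
  exact ⟨Q, by rw [← hQ, hr_zero, sub_zero]⟩

theorem exists_cuspParam_eq_of_X_pow_dvd (hpq : p.Coprime q) {h : R⟦X⟧}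
    (hh : PowerSeries.X ^ (p * q) ∣ h) : ∃ F, cuspParam R p q F = h := by
  rw [PowerSeries.X_pow_dvd_iff] at hh
  let F : MvPowerSeries (Fin 2) R := fun d ↦
    if d 1 < p then PowerSeries.coeff (p * d 0 + q * d 1) h else 0
  have coeff_F (d : Fin 2 →₀ ℕ) : MvPowerSeries.coeff d F =
      if d 1 < p then PowerSeries.coeff (p * d 0 + q * d 1) h else 0 := rfl
  have F_reduced (d : Fin 2 →₀ ℕ) (hd : p ≤ d 1) : MvPowerSeries.coeff d F = 0 := by
    rw [coeff_F, if_neg hd.not_gt]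
  refine ⟨F, PowerSeries.ext fun n ↦ ?_⟩
  by_cases hn : ∃ d : Fin 2 →₀ ℕ, d 1 < p ∧ p * d 0 + q * d 1 = n
  · obtain ⟨d, hd, rfl⟩ := hn
    rw [coeff_cuspParam_of_reduced hpq F_reduced hd, coeff_F, if_pos hd]
  · have hlt : n < p * q := lt_of_not_ge fun hle ↦ hn (exists_cuspWeight_eq (NeZero.pos p) hpq hle)
    rw [hh n hlt, coeff_cuspParam]
    refine finsum_eq_zero_of_forall_eq_zero fun d ↦ ite_eq_right_iff.2 fun hd ↦ F_reduced d ?_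
    by_contra! hdp
    exact hn ⟨d, hdp, hd⟩

end Parametrisation

section IntersectionLength

variable {k : Type*} [Field k] {p q : ℕ} [NeZero p] [NeZero q]

theorem length_quotient_range_cuspParam_ne_top (hpq : p.Coprime q) :
    Module.length k (k⟦X⟧ ⧸ (cuspParam k p q).toLinearMap.range) ≠ ⊤ := by
  have hle : (Ideal.span {(PowerSeries.X : k⟦X⟧) ^ (p * q)}).restrictScalars k ≤
      (cuspParam k p q).toLinearMap.range := fun h hh ↦
    exists_cuspParam_eq_of_X_pow_dvd hpq (Ideal.mem_span_singleton.1 hh)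
  refine ne_top_of_le_ne_top ?_
    (Module.length_le_of_surjective (Submodule.factor hle) (Submodule.factor_surjective hle))
  rw [length_quotient_restrictScalars, length_quotient_span_powerSeries_X_pow]
  exact ENat.natCast_ne_top _

theorem length_quotient_span_cusp_pair (hpq : p.Coprime q) {g : MvPowerSeries (Fin 2) k}
    (hg : cuspParam k p q g ≠ 0) :
    Module.length k (MvPowerSeries (Fin 2) k ⧸
        Ideal.span {MvPowerSeries.X 1 ^ p - MvPowerSeries.X 0 ^ q, g}) =
      (cuspParam k p q g).order := by
  have hspan : Ideal.span {MvPowerSeries.X 1 ^ p - MvPowerSeries.X 0 ^ q, g} =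
      RingHom.ker (cuspParam k p q) ⊔ Ideal.span {g} := by
    rw [ker_cuspParam hpq, Ideal.span_insert]
  rw [hspan, length_quotient_ker_sup_span_singleton (cuspParam k p q)
    (length_quotient_range_cuspParam_ne_top hpq) (mem_nonZeroDivisors_of_ne_zero hg),
    length_quotient_span_singleton_eq_order hg]

end IntersectionLength

theorem ι_X (i : Fin 2) : ι (X i) = MvPowerSeries.X i :=
  MvPolynomial.coe_X i

theorem finiteDimensional_and_interMult_add_eq {p q : ℕ} [NeZero p] [NeZero q]
    (hpq : p.Coprime q) {g : MvPolynomial (Fin 2) ℂ} {a b : ℕ} {U : ℂ⟦X⟧}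
    (hU : PowerSeries.constantCoeff U ≠ 0)
    (hg : PowerSeries.X ^ a * cuspParam ℂ p q (ι g) = PowerSeries.X ^ b * U) :
    FiniteDimensional ℂ (MvPowerSeries (Fin 2) ℂ ⧸ Ideal.span {ι (X 1 ^ p - X 0 ^ q), ι g}) ∧
      interMult (X 1 ^ p - X 0 ^ q) g + a = b := by
  have horder := order_add_eq_of_X_pow_mul_eq hU hg
  have hG : cuspParam ℂ p q (ι g) ≠ 0 := by
    intro h
    simp [h] at horder
  have hι : ι (X 1 ^ p - X 0 ^ q) = MvPowerSeries.X 1 ^ p - MvPowerSeries.X 0 ^ q := by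
    simp only [map_sub, map_pow, ι_X]
  have hlength := length_quotient_span_cusp_pair hpq hG
  rw [← hι] at hlength
  have hfin : FiniteDimensional ℂ
      (MvPowerSeries (Fin 2) ℂ ⧸ Ideal.span {ι (X 1 ^ p - X 0 ^ q), ι g}) :=
    finiteDimensional_of_length_ne_top (by rwa [hlength, ne_eq, PowerSeries.order_eq_top])
  refine ⟨hfin, ?_⟩
  rw [← hlength, Module.length_eq_finrank] at horder
  exact_mod_cast horder

section PartialDerivatives

variable {σ R : Type*} [CommRing R]

theorem X_mul_pderiv_X_pow (i : σ) (m : ℕ) :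
    (X i : MvPolynomial σ R) * pderiv i (X i ^ m) = (m : MvPolynomial σ R) * X i ^ m := by
  cases m with
  | zero => simp
  | succ m =>
    rw [pderiv_pow, pderiv_X_self, Nat.add_sub_cancel]
    ring

theorem X_pow_mul_iterate_pderiv_X_pow (i : σ) (m n : ℕ) :
    (X i : MvPolynomial σ R) ^ n * (pderiv i)^[n] (X i ^ m) =
      (∏ j ∈ Finset.range n, ((m : MvPolynomial σ R) - j)) * X i ^ m := by
  induction n with
  | zero => simp
  | succ n ih =>
    have hprod : (∏ j ∈ Finset.range n, ((m : MvPolynomial σ R) - j)) =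
        C (∏ j ∈ Finset.range n, ((m : R) - j)) := by simp
    rw [Function.iterate_succ_apply', Finset.prod_range_succ, hprod]
    rw [hprod] at ih
    have hderiv := congrArg (X i * pderiv i ·) ih
    simp only [pderiv_mul, pderiv_C] at hderiv
    linear_combination hderiv - n * ih
      + C (∏ j ∈ Finset.range n, ((m : R) - j)) * X_mul_pderiv_X_pow (R := R) i m
      - (pderiv i)^[n] (X i ^ m) * X_mul_pderiv_X_pow (R := R) i n

end PartialDerivatives

section CuspEquation

variable {p q : ℕ}

local notation "cusp" => (X 1 ^ p - X 0 ^ q : MvPolynomial (Fin 2) ℂ)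

theorem dy_dx_cusp : dy (dx cusp) = 0 := by
  simp [dx, dy]

theorem infl_cusp : infl cusp = dy cusp ^ 2 * dx (dx cusp) + dx cusp ^ 2 * dy (dy cusp) := by
  simp [infl, dy_dx_cusp]

theorem vert_cusp : vert cusp =
    (dx cusp ^ 2 + dy cusp ^ 2) *
        (dx cusp ^ 3 * dy (dy (dy cusp)) - dy cusp ^ 3 * dx (dx (dx cusp))) +
      3 * (dx cusp * dy cusp * (dx (dx cusp) - dy (dy cusp))) * infl cusp := by
  have dy_zero : dy 0 = 0 := map_zero _
  have dy_dx_dx : dy (dx (dx cusp)) = 0 := by simp [dx, dy]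
  simp [vert, dy_dx_cusp, dy_dx_dx, dy_zero]

variable {S : Type*} [CommRing S] (θ : MvPolynomial (Fin 2) ℂ →+* S)

theorem map_X_zero_pow_mul_map_iterate_dx_cusp (n : ℕ) :
    θ (X 0) ^ (n + 1) * θ (dx^[n + 1] cusp) =
      -((∏ j ∈ Finset.range (n + 1), ((q : S) - j)) * θ (X 0) ^ q) := by
  have hdx : dx cusp = -pderiv 0 (X 0 ^ q) := by simp [dx]
  have hiterate : dx^[n + 1] cusp = -(pderiv 0)^[n + 1] (X 0 ^ q) := by
    rw [Function.iterate_succ_apply, hdx]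
    exact iterate_map_neg (pderiv 0) n _
  rw [hiterate, map_neg, mul_neg, ← map_pow, ← map_mul, X_pow_mul_iterate_pderiv_X_pow]
  simp

theorem map_X_one_pow_mul_map_iterate_dy_cusp (hθ : θ (X 1) ^ p = θ (X 0) ^ q) (n : ℕ) :
    θ (X 1) ^ (n + 1) * θ (dy^[n + 1] cusp) =
      (∏ j ∈ Finset.range (n + 1), ((p : S) - j)) * θ (X 0) ^ q := by
  have hdy : dy cusp = pderiv 1 (X 1 ^ p) := by simp [dy]
  have hiterate : dy^[n + 1] cusp = (pderiv 1)^[n + 1] (X 1 ^ p) := by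
    rw [Function.iterate_succ_apply, hdy]
    rfl
  rw [hiterate, ← map_pow, ← map_mul, X_pow_mul_iterate_pderiv_X_pow, ← hθ]
  simp

theorem map_infl_cusp (hθ : θ (X 1) ^ p = θ (X 0) ^ q) :
    θ (X 0) ^ 2 * θ (X 1) ^ 2 * θ (infl cusp) = (θ (X 0) ^ q) ^ 3 * (p * q * (p - q)) := by
  have hx : θ (X 0) * θ (dx cusp) = -(q * θ (X 0) ^ q) := by
    simpa using map_X_zero_pow_mul_map_iterate_dx_cusp θ 0
  have hxx : θ (X 0) ^ 2 * θ (dx (dx cusp)) = -(q * (q - 1) * θ (X 0) ^ q) := by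
    simpa [Finset.prod_range_succ] using map_X_zero_pow_mul_map_iterate_dx_cusp θ 1
  have hy : θ (X 1) * θ (dy cusp) = p * θ (X 0) ^ q := by
    simpa using map_X_one_pow_mul_map_iterate_dy_cusp θ hθ 0
  have hyy : θ (X 1) ^ 2 * θ (dy (dy cusp)) = p * (p - 1) * θ (X 0) ^ q := by
    simpa [Finset.prod_range_succ] using map_X_one_pow_mul_map_iterate_dy_cusp θ hθ 1
  calc θ (X 0) ^ 2 * θ (X 1) ^ 2 * θ (infl cusp)
    _ = (θ (X 1) * θ (dy cusp)) ^ 2 * (θ (X 0) ^ 2 * θ (dx (dx cusp))) +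
        (θ (X 0) * θ (dx cusp)) ^ 2 * (θ (X 1) ^ 2 * θ (dy (dy cusp))) := by
      simp only [infl_cusp, map_add, map_mul, map_pow]
      ring
    _ = (θ (X 0) ^ q) ^ 3 * (p * q * (p - q)) := by
      rw [hx, hxx, hy, hyy]
      ring

theorem map_vert_cusp (hθ : θ (X 1) ^ p = θ (X 0) ^ q) :
    θ (X 0) ^ 5 * θ (X 1) ^ 5 * θ (vert cusp) = (θ (X 0) ^ q) ^ 6 * (p * q * (p - q) *
      (p ^ 2 * (2 * p - q) * θ (X 0) ^ 2 + q ^ 2 * (2 * q - p) * θ (X 1) ^ 2)) := by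
  have hx : θ (X 0) * θ (dx cusp) = -(q * θ (X 0) ^ q) := by
    simpa using map_X_zero_pow_mul_map_iterate_dx_cusp θ 0
  have hxx : θ (X 0) ^ 2 * θ (dx (dx cusp)) = -(q * (q - 1) * θ (X 0) ^ q) := by
    simpa [Finset.prod_range_succ] using map_X_zero_pow_mul_map_iterate_dx_cusp θ 1
  have hxxx : θ (X 0) ^ 3 * θ (dx (dx (dx cusp))) = -(q * (q - 1) * (q - 2) * θ (X 0) ^ q) := by
    simpa [Finset.prod_range_succ] using map_X_zero_pow_mul_map_iterate_dx_cusp θ 2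
  have hy : θ (X 1) * θ (dy cusp) = p * θ (X 0) ^ q := by
    simpa using map_X_one_pow_mul_map_iterate_dy_cusp θ hθ 0
  have hyy : θ (X 1) ^ 2 * θ (dy (dy cusp)) = p * (p - 1) * θ (X 0) ^ q := by
    simpa [Finset.prod_range_succ] using map_X_one_pow_mul_map_iterate_dy_cusp θ hθ 1
  have hyyy : θ (X 1) ^ 3 * θ (dy (dy (dy cusp))) = p * (p - 1) * (p - 2) * θ (X 0) ^ q := by
    simpa [Finset.prod_range_succ] using map_X_one_pow_mul_map_iterate_dy_cusp θ hθ 2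
  have hthree : θ 3 = 3 := map_ofNat θ 3
  calc θ (X 0) ^ 5 * θ (X 1) ^ 5 * θ (vert cusp)
    _ = ((θ (X 0) * θ (dx cusp)) ^ 2 * θ (X 1) ^ 2 + (θ (X 1) * θ (dy cusp)) ^ 2 * θ (X 0) ^ 2) *
          ((θ (X 0) * θ (dx cusp)) ^ 3 * (θ (X 1) ^ 3 * θ (dy (dy (dy cusp)))) -
            (θ (X 1) * θ (dy cusp)) ^ 3 * (θ (X 0) ^ 3 * θ (dx (dx (dx cusp))))) +
        3 * ((θ (X 0) * θ (dx cusp)) * (θ (X 1) * θ (dy cusp)) *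
            (θ (X 0) ^ 2 * θ (dx (dx cusp)) * θ (X 1) ^ 2 -
              θ (X 1) ^ 2 * θ (dy (dy cusp)) * θ (X 0) ^ 2)) *
          (θ (X 0) ^ 2 * θ (X 1) ^ 2 * θ (infl cusp)) := by
      simp only [vert_cusp, map_add, map_sub, map_mul, map_pow, hthree]
      ring
    _ = (θ (X 0) ^ q) ^ 6 * (p * q * (p - q) *
          (p ^ 2 * (2 * p - q) * θ (X 0) ^ 2 + q ^ 2 * (2 * q - p) * θ (X 1) ^ 2)) := by
      rw [hx, hxx, hxxx, hy, hyy, hyyy, map_infl_cusp θ hθ]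
      ring

end CuspEquation

section Numbers

variable {p q : ℕ} [NeZero p] [NeZero q]

local notation "cusp" => (X 1 ^ p - X 0 ^ q : MvPolynomial (Fin 2) ℂ)

variable (p q) in
/-- Restriction of polynomials to the parametrised cusp. -/
noncomputable def restrictCusp : MvPolynomial (Fin 2) ℂ →+* ℂ⟦X⟧ :=
  (cuspParam ℂ p q : MvPowerSeries (Fin 2) ℂ →+* ℂ⟦X⟧).comp ι

theorem restrictCusp_apply (g : MvPolynomial (Fin 2) ℂ) :
    restrictCusp p q g = cuspParam ℂ p q (ι g) := rfl

theorem restrictCusp_X_zero : restrictCusp p q (X 0) = PowerSeries.X ^ p := by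
  rw [restrictCusp_apply, ι_X, cuspParam_X_zero]

theorem restrictCusp_X_one : restrictCusp p q (X 1) = PowerSeries.X ^ q := by
  rw [restrictCusp_apply, ι_X, cuspParam_X_one]

theorem restrictCusp_X_one_pow : restrictCusp p q (X 1) ^ p = restrictCusp p q (X 0) ^ q := by
  rw [restrictCusp_X_zero, restrictCusp_X_one, ← pow_mul, ← pow_mul, mul_comm]

theorem finiteDimensional_and_interMult_infl_cusp (hpq : p.Coprime q) (hne : p ≠ q) :
    FiniteDimensional ℂ (MvPowerSeries (Fin 2) ℂ ⧸ Ideal.span {ι cusp, ι (infl cusp)}) ∧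
      interMult cusp (infl cusp) + (2 * p + 2 * q) = 3 * (p * q) := by
  let c : ℂ := p * q * (p - q)
  have hc : c ≠ 0 := by simp [c, NeZero.ne, sub_eq_zero, hne]
  refine finiteDimensional_and_interMult_add_eq hpq (U := PowerSeries.C c) (by simpa) ?_
  have hinfl := map_infl_cusp (restrictCusp p q) restrictCusp_X_one_pow
  rw [restrictCusp_X_zero, restrictCusp_X_one, restrictCusp_apply] at hinfl
  simp only [c, map_mul, map_sub, map_natCast]
  linear_combination hinfl

theorem finiteDimensional_and_interMult_vert_cusp (hpq : p.Coprime q) (hlt : p < q)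
    (hne : 2 * p ≠ q) :
    FiniteDimensional ℂ (MvPowerSeries (Fin 2) ℂ ⧸ Ideal.span {ι cusp, ι (vert cusp)}) ∧
      interMult cusp (vert cusp) + (5 * p + 5 * q) = 6 * (p * q) + 2 * p := by
  obtain ⟨r, hr, hq⟩ : ∃ r, r ≠ 0 ∧ q = p + r := ⟨q - p, by omega, by omega⟩
  let a : ℂ := p * q * (p - q) * (p ^ 2 * (2 * p - q))
  let b : ℂ := p * q * (p - q) * (q ^ 2 * (2 * q - p))
  have ha : a ≠ 0 := by
    have hne' : (2 * p : ℂ) ≠ q := by exact_mod_cast hne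
    simp [a, NeZero.ne, sub_eq_zero, hlt.ne, hne']
  refine finiteDimensional_and_interMult_add_eq hpq
    (U := PowerSeries.C a + PowerSeries.C b * PowerSeries.X ^ (2 * r)) (by simpa [hr]) ?_
  have hvert := map_vert_cusp (restrictCusp p q) restrictCusp_X_one_pow
  rw [restrictCusp_X_zero, restrictCusp_X_one, restrictCusp_apply] at hvert
  have hX : (PowerSeries.X : ℂ⟦X⟧) ^ q = PowerSeries.X ^ p * PowerSeries.X ^ r := by
    rw [← pow_add, hq]
  simp only [a, b, map_mul, map_sub, map_pow, map_natCast, map_ofNat]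
  refine (Eq.trans (by ring) hvert).trans ?_
  rw [hX]
  ring

end Numbers

/-- **Values of `I_f` and `V_f` for the curve `Y^p = X^q`** (`2 ≤ p < q`, `gcd(p,q)=1`),
parametrised by `(t^p, t^q)` with Milnor number `(p−1)(q−1)`:
`I_f = 3(p−1)(q−1) + p + q − 3` and `V_f = 6(p−1)(q−1) + 3p + q − 6`
(Theorems 2.6 and 3.8, covering several entries of Tables 1 and 3). -/
theorem inflection_vertex_numbers_quasihomogeneous_cusp
    (p q : ℕ) (hp : 2 ≤ p) (hpq : p < q) (hcop : Nat.gcd p q = 1) :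
    FiniteDimensional ℂ (MvPowerSeries (Fin 2) ℂ ⧸
        Ideal.span {ι (MvPolynomial.X 1 ^ p - MvPolynomial.X 0 ^ q),
          ι (infl (MvPolynomial.X 1 ^ p - MvPolynomial.X 0 ^ q))}) ∧
    FiniteDimensional ℂ (MvPowerSeries (Fin 2) ℂ ⧸
        Ideal.span {ι (MvPolynomial.X 1 ^ p - MvPolynomial.X 0 ^ q),
          ι (vert (MvPolynomial.X 1 ^ p - MvPolynomial.X 0 ^ q))}) ∧
    interMult (MvPolynomial.X 1 ^ p - MvPolynomial.X 0 ^ q)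
        (infl (MvPolynomial.X 1 ^ p - MvPolynomial.X 0 ^ q))
      = 3 * (p - 1) * (q - 1) + p + q - 3 ∧
    interMult (MvPolynomial.X 1 ^ p - MvPolynomial.X 0 ^ q)
        (vert (MvPolynomial.X 1 ^ p - MvPolynomial.X 0 ^ q))
      = 6 * (p - 1) * (q - 1) + 3 * p + q - 6 := by
  have : NeZero p := ⟨by omega⟩
  have : NeZero q := ⟨by omega⟩
  have hne : 2 * p ≠ q := by
    rintro rfl
    rw [Nat.gcd_mul_left_right] at hcop
    omega
  obtain ⟨infl_finite, infl_mult⟩ := finiteDimensional_and_interMult_infl_cusp hcop hpq.ne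
  obtain ⟨vert_finite, vert_mult⟩ := finiteDimensional_and_interMult_vert_cusp hcop hpq hne
  have milnor : (p - 1) * (q - 1) + p + q = p * q + 1 := by
    obtain ⟨a, rfl⟩ := Nat.exists_eq_succ_of_ne_zero (NeZero.ne p)
    obtain ⟨b, rfl⟩ := Nat.exists_eq_succ_of_ne_zero (NeZero.ne q)
    simp only [Nat.succ_eq_add_one, Nat.add_sub_cancel]
    ring
  refine ⟨infl_finite, vert_finite, ?_, ?_⟩ <;> rw [mul_assoc] <;> omega
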